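/- Let F be a field of characteristic p with p > 2 (CharP F p and 2 < p). Then for every t ≥ 2 there exists N : ℕ and a projection substitution θ : (Fin N × Fin N) → MvPolynomial (Fin t × Fin t) F such that MvPolynomial.aeval θ Q_N = HC_t. In other words, over any field of characteristic greater than 2, the Hamiltonian cycle polynomial HC_t is a projection of Q_N for some N. -/

import Mathlib

open scoped BigOperators

open Classical in
/-- The set of all `n`-cycles in `Equiv.Perm (Fin n)`. -/
noncomputable def nCycles (n : ℕ) : Finset (Equiv.Perm (Fin n)) :=
  Finset.univ.filter fun π => π.IsCycle ∧ π.support = Finset.univ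

/-- The Hamiltonian cycle polynomial `HC_n`. -/
noncomputable def HC (R : Type*) [CommRing R] (n : ℕ) : MvPolynomial (Fin n × Fin n) R :=
  ∑ π ∈ nCycles n, ∏ i : Fin n, MvPolynomial.X (i, π i)

/-- `HC_n^{(2)}`, with every variable squared. -/
noncomputable def HC2 (R : Type*) [CommRing R] (n : ℕ) : MvPolynomial (Fin n × Fin n) R :=
  ∑ π ∈ nCycles n, ∏ i : Fin n, (MvPolynomial.X (i, π i)) ^ 2

/-- `Q_n := HC_n + HC_n^{(2)}`. -/
noncomputable def Q (R : Type*) [CommRing R] (n : ℕ) : MvPolynomial (Fin n × Fin n) R :=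
  HC R n + HC2 R n

/-- A projection substitution sends each variable to a variable or a constant. -/
def IsProjection {σ τ F : Type*} [CommSemiring F] (θ : σ → MvPolynomial τ F) : Prop :=
  ∀ v : σ, (∃ k : τ, θ v = MvPolynomial.X k) ∨ (∃ c : F, θ v = MvPolynomial.C c)

namespace HamProj

/-- A permutation is transitive if every forward-invariant nonempty predicate is everything. -/
def Tr {V : Type*} (π : Equiv.Perm V) : Prop :=
  ∀ P : V → Prop, (∀ x, P x → P (π x)) → ∀ x y, P x → P y

lemma tr_iff {n : ℕ} (hn : 2 ≤ n) (π : Equiv.Perm (Fin n)) :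
    Tr π ↔ (π.IsCycle ∧ π.support = Finset.univ) := by
  constructor
  · intro h
    have hne : ∀ x, π x ≠ x := by
      intro x hx
      have h1 := h (fun y => y = x) (by rintro y rfl; exact hx) x
      have h2 : (⟨0, by omega⟩ : Fin n) = ⟨1, by omega⟩ :=
        (h1 _ rfl).trans (h1 _ rfl).symm
      simp at h2
    have hs : ∀ x y, π.SameCycle x y := by
      intro x y
      refine h (fun z => π.SameCycle x z) ?_ x y (Equiv.Perm.SameCycle.refl _ _)
      intro z hz
      exact Equiv.Perm.sameCycle_apply_right.2 hz
    refine ⟨⟨⟨0, by omega⟩, hne _, fun y _ => hs _ y⟩, ?_⟩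
    ext x
    simp [hne x]
  · rintro ⟨hc, hs⟩ P hP x y hx
    have hne : ∀ x, π x ≠ x := by
      intro x
      have : x ∈ π.support := by rw [hs]; simp
      exact Equiv.Perm.mem_support.1 this
    obtain ⟨k, -, rfl⟩ := (hc.sameCycle (hne x) (hne y)).exists_pow_eq'
    clear hs hc
    induction k with
    | zero => simpa using hx
    | succ k ih => rw [pow_succ', Equiv.Perm.mul_apply]; exact hP _ ih

lemma tr_conj {V W : Type*} (e : V ≃ W) (π : Equiv.Perm V) :
    Tr (e.permCongr π) ↔ Tr π := by
  constructor
  · intro h P hP x y hx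
    have := h (fun w => P (e.symm w)) (by intro w hw; simpa using hP _ hw) (e x) (e y)
      (by simpa using hx)
    simpa using this
  · intro h P hP x y hx
    have := h (fun w => P (e w)) (by intro w hw; simpa using hP _ hw) (e.symm x) (e.symm y)
      (by simpa using hx)
    simpa using this

section
variable {V : Type*} [DecidableEq V]

/-- Insert `none` directly after `i` in `σ`. -/
def ins (i : V) (σ : Equiv.Perm V) : Equiv.Perm (Option V) :=
  Equiv.Perm.decomposeOption.symm (some (σ i), σ)

lemma ins_none (i : V) (σ : Equiv.Perm V) : ins i σ none = some (σ i) := by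
  simp [ins]

lemma ins_self (i : V) (σ : Equiv.Perm V) : ins i σ (some i) = none := by
  simp [ins]

lemma ins_ne (i a : V) (h : a ≠ i) (σ : Equiv.Perm V) : ins i σ (some a) = some (σ a) := by
  simp only [ins, Equiv.Perm.decomposeOption_symm_apply, Equiv.Perm.mul_apply,
    Equiv.optionCongr_apply, Option.map_some]
  rw [Equiv.swap_apply_of_ne_of_ne] <;> simp [h]

lemma tr_ins (i : V) (σ : Equiv.Perm V) : Tr (ins i σ) ↔ Tr σ := by
  constructor
  · intro h P hP x y hx
    refine h (fun o => o.elim (P (σ i)) P) ?_ (some x) (some y) hx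
    rintro (_ | a) ha
    · rw [ins_none]; exact ha
    · by_cases hai : a = i
      · subst hai; rw [ins_self]; exact hP _ ha
      · rw [ins_ne i a hai]; exact hP _ ha
  · intro h P hP
    have h0 : P none → P (some (σ i)) := fun h => by have := hP _ h; rwa [ins_none] at this
    have h1 : P (some i) → P none := fun h => by have := hP _ h; rwa [ins_self] at this
    have h2 : ∀ x y, P (some x) → P (some y) := by
      refine h (fun a => P (some a)) ?_
      intro a ha
      by_cases hai : a = i
      · subst hai; exact h0 (h1 ha)
      · have := hP _ ha; rwa [ins_ne i a hai] at this
    rintro (_ | x) (_ | y) hx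
    · exact hx
    · exact h2 _ _ (h0 hx)
    · exact h1 (h2 _ _ hx)
    · exact h2 _ _ hx

lemma not_tr_none [Nonempty V] (σ : Equiv.Perm V) :
    ¬ Tr (Equiv.Perm.decomposeOption.symm (none, σ)) := by
  intro h
  obtain ⟨v⟩ := ‹Nonempty V›
  have := h (fun o => o = none) (by rintro x rfl; simp) none (some v) rfl
  simp at this

end

open Classical in
/-- The Hamiltonian cycle sum of a matrix. -/
noncomputable def hc {V R : Type*} [Fintype V] [CommRing R] (A : V → V → R) : R :=
  ∑ π : Equiv.Perm V, if Tr π then ∏ x, A x (π x) else 0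

open Classical in
lemma hc_equiv {V W R : Type*} [Fintype V] [Fintype W] [CommRing R] (e : V ≃ W)
    (A : W → W → R) : hc (fun x y => A (e x) (e y)) = hc A := by
  unfold hc
  refine Fintype.sum_equiv e.permCongr _ _ ?_
  intro π
  rw [tr_conj]
  congr 1
  refine Fintype.prod_equiv e _ _ ?_
  intro x
  simp

open Classical in
lemma hc_step {V R : Type*} [Fintype V] [Nonempty V] [CommRing R]
    (A : Option V → Option V → R) :
    hc A = ∑ i : V, A (some i) none *
      hc (fun a b => if a = i then A none (some b) else A (some a) (some b)) := by
  have e0 : hc A = ∑ π : Equiv.Perm (Option V), if Tr π then ∏ x, A x (π x) else 0 :=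
    Finset.sum_congr (by ext; simp) (fun _ _ => rfl)
  rw [e0]
  unfold hc
  refine (Fintype.sum_equiv (Equiv.Perm.decomposeOption (α := V)) _
    (fun q => if Tr (Equiv.Perm.decomposeOption.symm q) then
      ∏ x, A x (Equiv.Perm.decomposeOption.symm q x) else 0)
    (fun π => by rw [Equiv.symm_apply_apply])).trans ?_
  rw [Fintype.sum_prod_type, Fintype.sum_option]
  simp only [not_tr_none, if_false, Finset.sum_const_zero, zero_add]
  rw [Finset.sum_comm]
  simp_rw [Finset.mul_sum]
  rw [Finset.sum_comm (γ := V)]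
  refine Finset.sum_congr rfl fun σ _ => ?_
  rw [← Equiv.sum_comp σ]
  refine Finset.sum_congr rfl fun i _ => ?_
  change (if Tr (ins i σ) then ∏ x, A x (ins i σ x) else 0) = _
  rw [tr_ins]
  split_ifs
  · rw [Fintype.prod_option, ins_none, Fintype.prod_eq_mul_prod_compl i,
      Fintype.prod_eq_mul_prod_compl i, ins_self, if_pos rfl]
    have : ∏ a ∈ {i}ᶜ, A (some a) (ins i σ (some a)) =
        ∏ a ∈ {i}ᶜ, (if a = i then A none (some (σ a)) else A (some a) (some (σ a))) := by
      refine Finset.prod_congr rfl fun a ha => ?_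
      have hai : a ≠ i := by simpa using ha
      rw [ins_ne i a hai, if_neg hai]
    rw [this]; ring
  · simp

open Classical in
/-- The gadget matrix: the row of `s` is rerouted through a directed triangle. -/
noncomputable def G {V R : Type*} [CommRing R] (s : V) (u v w : R) (X : V → V → R) :
    Option (Option (Option V)) → Option (Option (Option V)) → R
  | some (some (some a)), some (some (some b)) => if a = s then 0 else X a b
  | some (some (some a)), some (some none) => if a = s then u else 0
  | some (some (some a)), some none => if a = s then v else 0
  | some (some (some a)), none => if a = s then w else 0
  | some (some none), some (some (some b)) => X s b
  | some none, some (some (some b)) => X s b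
  | none, some (some (some b)) => X s b
  | some (some none), some none => 1
  | some none, none => 1
  | none, some (some none) => 1
  | _, _ => 0

open Classical in
lemma hc_G {V R : Type*} [Fintype V] [CommRing R] (s : V) (u v w : R) (X : V → V → R) :
    hc (G s u v w X) = (u + v + w) * hc X := by
  have : Nonempty V := ⟨s⟩
  have hX : ∀ a b, (if a = s then X s b else X a b) = X a b := by
    intro a b; split_ifs with h
    · rw [h]
    · rfl
  have hX' : ∀ a b, (if a = s then X s b else if a = s then 0 else X a b) = X a b := by
    intro a b; split_ifs with h
    · rw [h]
    · rfl
  have hI : ∀ (P : Prop) (a b c : R),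
      (if P then a else if P then b else c) = if P then a else c := by
    intro P a b c; split_ifs <;> rfl
  simp only [hc_step, Fintype.sum_option, G, ite_mul, zero_mul, one_mul, Finset.sum_ite_eq',
    Finset.mem_univ, if_true, reduceCtorEq, if_false, Option.some.injEq,
    Finset.sum_const_zero, zero_add, add_zero, hX, hX', hI, ite_self]
  change u * hc X + v * hc X + w * hc X = _
  ring

open Classical in
lemma G_sq {V R : Type*} [CommRing R] (s : V) (u v w : R) (X : V → V → R)
    (x y : Option (Option (Option V))) :
    (G s u v w X x y) ^ 2 = G s (u ^ 2) (v ^ 2) (w ^ 2) (fun a b => X a b ^ 2) x y := by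
  rcases x with _ | _ | _ | x <;> rcases y with _ | _ | _ | y <;> simp [G, ite_pow]

lemma hc_eq {n : ℕ} (hn : 2 ≤ n) {R : Type*} [CommRing R] (A : Fin n → Fin n → R) :
    ∑ π ∈ nCycles n, ∏ i, A i (π i) = hc A := by
  classical
  unfold nCycles hc
  rw [Finset.sum_filter]
  refine Finset.sum_congr (by ext; simp) fun π _ => ?_
  by_cases h : Tr π
  · rw [if_pos h, if_pos ((tr_iff hn π).1 h)]
  · rw [if_neg h, if_neg (fun h' => h ((tr_iff hn π).2 h'))]

lemma exists_weights {F : Type*} [Field F] (p : ℕ) [CharP F p] (hp : 2 < p) :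
    ∃ u v w : F, u + v + w = 1 ∧ u ^ 2 + v ^ 2 + w ^ 2 = 0 := by
  have : NeZero p := ⟨by omega⟩
  obtain ⟨a, b, hab⟩ := CharP.sq_add_sq F p (-1)
  have h2 : (2 : F) ≠ 0 := by
    intro h
    have := (CharP.cast_eq_zero_iff F p 2).1 (by exact_mod_cast h)
    exact absurd (Nat.le_of_dvd (by norm_num) this) (by omega)
  have main : ∀ x y : F, x ^ 2 + y ^ 2 = -1 → 1 + x + y ≠ 0 →
      ∃ u v w : F, u + v + w = 1 ∧ u ^ 2 + v ^ 2 + w ^ 2 = 0 := by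
    intro x y hxy hne
    refine ⟨1 / (1 + x + y), x / (1 + x + y), y / (1 + x + y), ?_, ?_⟩
    · field_simp
    · field_simp
      linear_combination hxy
  have hab' : (a : F) ^ 2 + (b : F) ^ 2 = -1 := by simpa using hab
  by_cases h : (1 : F) + a + b = 0
  · refine main (-a) (-b) (by linear_combination hab') ?_
    intro h'
    exact h2 (by linear_combination h + h')
  · exact main a b hab' h

end HamProj

open HamProj in
/-- Over any field of characteristic `p > 2`, the Hamiltonian cycle polynomial `HC_t`
is a projection of `Q_N` for some `N`. -/
theorem stmt15 {F : Type*} [Field F] (p : ℕ) [CharP F p] (hp : 2 < p)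
    (t : ℕ) (ht : 2 ≤ t) :
    ∃ (N : ℕ) (θ : Fin N × Fin N → MvPolynomial (Fin t × Fin t) F),
      IsProjection θ ∧ MvPolynomial.aeval θ (Q F N) = HC F t := by
  classical
  obtain ⟨u, v, w, h1, h2⟩ := exists_weights (F := F) p hp
  let e : Fin (t + 3) ≃ Option (Option (Option (Fin t))) :=
    Fintype.equivOfCardEq (by simp)
  let s : Fin t := ⟨0, by omega⟩
  let X : Fin t → Fin t → MvPolynomial (Fin t × Fin t) F := fun a b => MvPolynomial.X (a, b)
  let A := G s (MvPolynomial.C u) (MvPolynomial.C v) (MvPolynomial.C w) X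
  refine ⟨t + 3, fun q => A (e q.1) (e q.2), ?_, ?_⟩
  · have hA : ∀ x y, (∃ k, A x y = MvPolynomial.X k) ∨ (∃ c : F, A x y = MvPolynomial.C c) := by
      have z : ∃ c : F, (0 : MvPolynomial (Fin t × Fin t) F) = MvPolynomial.C c := ⟨0, by simp⟩
      have o : ∃ c : F, (1 : MvPolynomial (Fin t × Fin t) F) = MvPolynomial.C c := ⟨1, by simp⟩
      rintro (_ | _ | _ | x) (_ | _ | _ | y) <;> simp only [A, G] <;> try split_ifs
      all_goals first
        | exact Or.inr z
        | exact Or.inr o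
        | exact Or.inl ⟨_, rfl⟩
        | exact Or.inr ⟨_, rfl⟩
    rintro ⟨x, y⟩
    exact hA _ _
  · have e1 : hc A = HC F t := by
      rw [hc_G, ← MvPolynomial.C_add, ← MvPolynomial.C_add, h1, MvPolynomial.C_1, one_mul,
        ← hc_eq ht]
      rfl
    have e2 : hc (fun x y => A x y ^ 2) = 0 := by
      simp only [A, G_sq]
      rw [hc_G, ← MvPolynomial.C_pow, ← MvPolynomial.C_pow, ← MvPolynomial.C_pow,
        ← MvPolynomial.C_add, ← MvPolynomial.C_add, h2, MvPolynomial.C_0, zero_mul]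
    simp only [Q, HC, HC2, map_add, map_sum, map_prod, map_pow, MvPolynomial.aeval_X]
    rw [hc_eq (by omega) (fun x y => A (e x) (e y)),
      hc_eq (by omega) (fun x y => A (e x) (e y) ^ 2), hc_equiv e A,
      hc_equiv e (fun x y => A x y ^ 2), e1, e2, add_zero]
    rfl
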